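/- The Gerstenhaber bracket [x,y] := x∘y − (−1)^{d(x)d(y) + |x||y|} y∘x on homogeneous multilinear maps of arities ≥ 1 on A makes the truncated Hochschild complex a bigraded Lie algebra: it satisfies [y,x] = −(−1)^{d(x)d(y)+|x||y|}[x,y] and the bigraded Jacobi identity [x,[y,z]] = [[x,y],z] + (−1)^{d(x)d(y)+|x||y|} [y,[x,z]] for all homogeneous multilinear maps x, y, z. -/

import Mathlib

/-!
The Jacobi identity follows from the graded right pre-Lie identity: the associator
`(x∘y)∘z − x∘(y∘z)` is graded symmetric in `y` and `z`. In the double sum expanding `(x∘y)∘z`,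
the terms in which `z` is inserted into `y` make up `x∘(y∘z)` (`gTerm_nested`, with the
reindexing `sum_triangles`). What remains are the terms in which `z` is inserted in `x` to the
left of `y` (`gLeft`) or to its right (`gRight`). Performing two disjoint insertions in the other
order exchanges `gLeft` for `y, z` with `gRight` for `z, y`, up to the Koszul sign
`(−1)^{d(y)d(z)+|y||z|}` (`gLeft_eq`), so their sum is graded symmetric (`assoc_symm`).

Expanding the three double brackets by biadditivity of `∘`, the Jacobi identity is a signed
combination of the pre-Lie identities for the associators starting with `x`, `y` and `z`.
-/

/-- Insert the value `v` (of a composed `n`-linear map) at slot `i` of the argument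
sequence `a`, shifting the remaining arguments. -/
def insArg {V : Type*} (i n : ℕ) (v : V) (a : ℕ → V) : ℕ → V :=
  fun j => if j < i then a j else if j = i then v else a (j + n - 1)

/-- The corresponding insertion on parity sequences: the inserted slot receives the parity
`q + p i + ⋯ + p (i+n−1)` of `y(aᵢ,…,a_{i+n−1})`, where `q` is the parity of `y`. -/
def insPar (i n : ℕ) (q : ZMod 2) (p : ℕ → ZMod 2) : ℕ → ZMod 2 :=
  fun j => if j < i then p j
    else if j = i then q + ∑ k ∈ Finset.range n, p (i + k)
    else p (j + n - 1)

/-- Gerstenhaber composition `x∘y` of an `m`-linear map `x` with an `n`-linear map `y` of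
parity `qy`, evaluated on homogeneous arguments `a` with parities `p`:
`(x∘y)(a₁,…,a_{m+n−1}) = Σᵢ (−1)^{(n−1)(i−1)+|y|(|a₁|+⋯+|a_{i−1}|)}
x(a₁,…,a_{i−1}, y(aᵢ,…,a_{i+n−1}), a_{i+n},…)`. -/
def gcomp {V : Type*} [AddCommGroup V] (m n : ℕ) (qy : ZMod 2)
    (x y : (ℕ → ZMod 2) → (ℕ → V) → V) : (ℕ → ZMod 2) → (ℕ → V) → V :=
  fun p a => ∑ i ∈ Finset.range m,
    ((-1 : ℤ) ^ ((n - 1) * i + qy.val * ∑ j ∈ Finset.range i, (p j).val)) •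
      x (insPar i n qy p) (insArg i n (y (fun k => p (i + k)) (fun k => a (i + k))) a)

/-- `x` is a homogeneous multilinear map of arity `m` and parity `q` with respect to the
ℤ/2-grading `𝒜` induced by the ℤ-grading of the underlying space: it is additive and
homogeneous in each of its `m` slots, depends only on those slots, and sends homogeneous
arguments to a homogeneous value of parity `q + |a₁| + ⋯ + |aₘ|`. -/
def IsHomogMultilinear {K V : Type*} [Field K] [AddCommGroup V] [Module K V]
    (𝒜 : ZMod 2 → Submodule K V) (m : ℕ) (q : ZMod 2)
    (x : (ℕ → ZMod 2) → (ℕ → V) → V) : Prop :=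
  (∀ (p : ℕ → ZMod 2) (a : ℕ → V) (i : ℕ), i < m → ∀ u v : V,
      x p (Function.update a i (u + v))
        = x p (Function.update a i u) + x p (Function.update a i v))
  ∧ (∀ (p : ℕ → ZMod 2) (a : ℕ → V) (i : ℕ), i < m → ∀ (c : K) (u : V),
      x p (Function.update a i (c • u)) = c • x p (Function.update a i u))
  ∧ (∀ (p p' : ℕ → ZMod 2) (a a' : ℕ → V),
      (∀ j < m, p j = p' j) → (∀ j < m, a j = a' j) → x p a = x p' a')
  ∧ (∀ (p : ℕ → ZMod 2) (a : ℕ → V), (∀ j < m, a j ∈ 𝒜 (p j)) →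
      x p a ∈ 𝒜 (q + ∑ j ∈ Finset.range m, p j))

/-- The Gerstenhaber bracket `[x,y] = x∘y − (−1)^{d(x)d(y)+|x||y|} y∘x` of an `m`-linear
map `x` of parity `qx` and an `n`-linear map `y` of parity `qy`. -/
def gBracket {V : Type*} [AddCommGroup V] (m n : ℕ) (qx qy : ZMod 2)
    (x y : (ℕ → ZMod 2) → (ℕ → V) → V) : (ℕ → ZMod 2) → (ℕ → V) → V :=
  fun p a => gcomp m n qy x y p a
    - ((-1 : ℤ) ^ ((m - 1) * (n - 1) + qx.val * qy.val)) • gcomp n m qx y x p a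

/-! ### Signs and insertions -/

lemma negOnePow_congr {a b : ℕ} (h : (a : ZMod 2) = b) : (-1 : ℤ) ^ a = (-1 : ℤ) ^ b := by
  have h' : a % 2 = b % 2 := (ZMod.natCast_eq_natCast_iff a b 2).1 h
  rw [neg_one_pow_eq_pow_mod_two, h', ← neg_one_pow_eq_pow_mod_two]

lemma insArg_eq_update {V : Type*} (i n : ℕ) (v w : V) (a : ℕ → V) :
    insArg i n v a = Function.update (insArg i n w a) i v := by
  funext j
  by_cases h : j = i
  · subst h; simp [insArg]
  · simp [insArg, h]

/-- Additivity of `x` in its `i`-th slot, packaged as a homomorphism. -/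
lemma exists_slotHom {K V : Type*} [Field K] [AddCommGroup V] [Module K V]
    {𝒜 : ZMod 2 → Submodule K V} {m : ℕ} {q : ZMod 2} {x : (ℕ → ZMod 2) → (ℕ → V) → V}
    (hx : IsHomogMultilinear 𝒜 m q x) {i : ℕ} (hi : i < m) (n : ℕ) (p : ℕ → ZMod 2)
    (a : ℕ → V) : ∃ f : V →+ V, ∀ v, x p (insArg i n v a) = f v := by
  refine ⟨AddMonoidHom.mk' (fun v => x p (insArg i n v a)) ?_, fun v => rfl⟩
  intro u v
  have h := hx.1 p (insArg i n 0 a) i hi u v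
  simpa only [← insArg_eq_update] using h

lemma insPar_shift (i j n l : ℕ) (q : ZMod 2) (p : ℕ → ZMod 2) :
    insPar (i + j) n q p (i + l) = insPar j n q (fun k => p (i + k)) l := by
  unfold insPar
  by_cases h1 : l < j
  · simp [h1]
  · by_cases h2 : l = j
    · simp [h2, add_assoc]
    · have : i + l + n - 1 = i + (l + n - 1) := by omega
      simp [h1, h2, this]

lemma insArg_shift {V : Type*} (i j n l : ℕ) (v : V) (a : ℕ → V) :
    insArg (i + j) n v a (i + l) = insArg j n v (fun k => a (i + k)) l := by
  unfold insArg
  by_cases h1 : l < j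
  · simp [h1]
  · by_cases h2 : l = j
    · simp [h2]
    · have : i + l + n - 1 = i + (l + n - 1) := by omega
      simp [h1, h2, this]

lemma sum_insPar_of_le {i k : ℕ} (h : i ≤ k) (n : ℕ) (q : ZMod 2) (p : ℕ → ZMod 2) :
    ∑ l ∈ Finset.range i, insPar k n q p l = ∑ l ∈ Finset.range i, p l := by
  refine Finset.sum_congr rfl fun l hl => ?_
  have : l < k := by have := Finset.mem_range.1 hl; omega
  simp [insPar, this]

lemma sum_insPar {j N : ℕ} (h : j ≤ N) (P : ℕ) (q : ZMod 2) (p : ℕ → ZMod 2) :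
    ∑ l ∈ Finset.range (N + 1), insPar j (P + 1) q p l
      = q + ∑ l ∈ Finset.range (N + P + 1), p l := by
  obtain ⟨r, rfl⟩ := Nat.exists_eq_add_of_le h
  have e1 : j + r + 1 = (j + 1) + r := by omega
  have e2 : j + r + P + 1 = (j + (P + 1)) + r := by omega
  rw [e1, e2, Finset.sum_range_add, Finset.sum_range_succ, Finset.sum_range_add,
    Finset.sum_range_add, sum_insPar_of_le le_rfl]
  have h1 : insPar j (P + 1) q p j = q + ∑ k ∈ Finset.range (P + 1), p (j + k) := by
    simp [insPar]
  have h2 : ∀ l, insPar j (P + 1) q p (j + 1 + l) = p (j + (P + 1) + l) := by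
    intro l
    have a1 : ¬ (j + 1 + l < j) := by omega
    have a2 : ¬ (j + 1 + l = j) := by omega
    have a3 : j + 1 + l + (P + 1) - 1 = j + (P + 1) + l := by omega
    simp only [insPar, a1, a2, a3, if_false]
  simp only [h1, h2]
  ring

/-! ### The terms of an iterated composition -/

/-- The term of `(x∘y)∘z`, for `y` of arity `N + 1` and `z` of arity `P + 1`, in which `z` takes
the arguments from position `k` on, and then `y` those from position `i` on in the sequence
so contracted. -/
def gTerm {V : Type*} [AddCommGroup V] (N P : ℕ) (qy qz : ZMod 2)
    (x y z : (ℕ → ZMod 2) → (ℕ → V) → V) (pa : ℕ → ZMod 2) (a : ℕ → V) (i k : ℕ) : V :=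
  ((-1 : ℤ) ^ (P * k + qz.val * ∑ j ∈ Finset.range k, (pa j).val)) •
    ((-1 : ℤ) ^ (N * i + qy.val * ∑ j ∈ Finset.range i, (insPar k (P + 1) qz pa j).val)) •
      x (insPar i (N + 1) qy (insPar k (P + 1) qz pa))
        (insArg i (N + 1)
          (y (fun l => insPar k (P + 1) qz pa (i + l))
            (fun l => insArg k (P + 1) (z (fun l => pa (k + l)) (fun l => a (k + l))) a (i + l)))
          (insArg k (P + 1) (z (fun l => pa (k + l)) (fun l => a (k + l))) a))

/-- The part of `(x∘y)∘z` where `z` is inserted in `x` to the left of `y`. -/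
def gLeft {V : Type*} [AddCommGroup V] (M N P : ℕ) (qy qz : ZMod 2)
    (x y z : (ℕ → ZMod 2) → (ℕ → V) → V) (pa : ℕ → ZMod 2) (a : ℕ → V) : V :=
  ∑ i ∈ Finset.range (M + 1), ∑ k ∈ Finset.range i, gTerm N P qy qz x y z pa a i k

/-- The part of `(x∘y)∘z` where `z` is inserted in `x` to the right of `y`: for slots `k < i`
of `x` holding `y` and `z`, the arguments of `z` start at position `i + N`. -/
def gRight {V : Type*} [AddCommGroup V] (M N P : ℕ) (qy qz : ZMod 2)
    (x y z : (ℕ → ZMod 2) → (ℕ → V) → V) (pa : ℕ → ZMod 2) (a : ℕ → V) : V :=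
  ∑ i ∈ Finset.range (M + 1), ∑ k ∈ Finset.range i, gTerm N P qy qz x y z pa a k (i + N)

lemma gcomp_gcomp_left {V : Type*} [AddCommGroup V] (M N P : ℕ) (qy qz : ZMod 2)
    (x y z : (ℕ → ZMod 2) → (ℕ → V) → V) (pa : ℕ → ZMod 2) (a : ℕ → V) :
    gcomp (M + N + 1) (P + 1) qz (gcomp (M + 1) (N + 1) qy x y) z pa a
      = ∑ i ∈ Finset.range (M + 1), ∑ k ∈ Finset.range (M + N + 1),
          gTerm N P qy qz x y z pa a i k := by
  rw [Finset.sum_comm]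
  simp only [gcomp, gTerm, Finset.smul_sum, Nat.add_sub_cancel]

/-- The pairs `(i, k)` with `i ≤ M` and `k ≤ M + N` fall into those with `k < i`, those with
`i ≤ k ≤ i + N`, and those with `i + N < k`. -/
lemma sum_triangles {V : Type*} [AddCommGroup V] (M N : ℕ) (T : ℕ → ℕ → V) :
    ∑ i ∈ Finset.range (M + 1), ∑ k ∈ Finset.range (M + N + 1), T i k
      = ∑ i ∈ Finset.range (M + 1), ∑ k ∈ Finset.range i, T i k
        + ∑ i ∈ Finset.range (M + 1), ∑ j ∈ Finset.range (N + 1), T i (i + j)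
        + ∑ i ∈ Finset.range (M + 1), ∑ k ∈ Finset.range i, T k (i + N) := by
  have h3 : ∑ i ∈ Finset.range (M + 1), ∑ k ∈ Finset.range i, T k (i + N)
      = ∑ k ∈ Finset.range (M + 1), ∑ i ∈ Finset.Ico (k + 1) (M + 1), T k (i + N) := by
    refine Finset.sum_comm' fun i k => ?_
    simp only [Finset.mem_range, Finset.mem_Ico]
    omega
  rw [h3, ← Finset.sum_add_distrib, ← Finset.sum_add_distrib]
  refine Finset.sum_congr rfl fun i hi => ?_
  have hi' : i ≤ M := by have := Finset.mem_range.1 hi; omega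
  obtain ⟨r, rfl⟩ := Nat.exists_eq_add_of_le hi'
  have e : i + r + N + 1 = (i + (N + 1)) + r := by omega
  rw [e, Finset.sum_range_add, Finset.sum_range_add, Finset.sum_Ico_eq_sum_range]
  have e2 : i + r + 1 - (i + 1) = r := by omega
  rw [e2]
  congr 1
  refine Finset.sum_congr rfl fun l _ => ?_
  congr 1
  omega

/-- The term of `(x∘y)∘z` inserting `z` in slot `j` of `y` is a term of `x∘(y∘z)`. -/
lemma gTerm_nested {V : Type*} [AddCommGroup V] (N P : ℕ) (qy qz : ZMod 2)
    (x y z : (ℕ → ZMod 2) → (ℕ → V) → V) (pa : ℕ → ZMod 2) (a : ℕ → V) (i j : ℕ)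
    (hj : j ≤ N) :
    gTerm N P qy qz x y z pa a i (i + j) =
      ((-1 : ℤ) ^ ((N + P) * i + (qy + qz).val * ∑ l ∈ Finset.range i, (pa l).val)) •
      ((-1 : ℤ) ^ (P * j + qz.val * ∑ l ∈ Finset.range j, (pa (i + l)).val)) •
        x (insPar i (N + P + 1) (qy + qz) pa)
          (insArg i (N + P + 1)
            (y (insPar j (P + 1) qz (fun k => pa (i + k)))
              (insArg j (P + 1) (z (fun l => pa (i + (j + l))) (fun l => a (i + (j + l))))
                (fun k => a (i + k)))) a) := by
  unfold gTerm
  simp only [insPar_shift, insArg_shift, smul_smul, ← pow_add, add_assoc i j]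
  congr 1
  · apply negOnePow_congr
    push_cast
    simp only [ZMod.natCast_zmod_val]
    rw [sum_insPar_of_le (Nat.le_add_right i j), Finset.sum_range_add]
    ring
  congr 1
  · funext l
    simp only [insPar]
    by_cases h1 : l < i
    · have : l < i + j := by omega
      simp [h1, this]
    by_cases h2 : l = i
    · subst h2
      have h := sum_insPar hj P qz (fun k => pa (l + k))
      simp only [← insPar_shift l j] at h
      simp only [insPar] at h
      simp only [lt_irrefl, if_false, if_true, h]
      ring
    · have a1 : ¬ (l + (N + 1) - 1 < i + j) := by omega
      have a2 : ¬ (l + (N + 1) - 1 = i + j) := by omega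
      have a3 : l + (N + 1) - 1 + (P + 1) - 1 = l + (N + P + 1) - 1 := by omega
      simp only [h1, h2, a1, a2, a3, if_false]
  · funext l
    simp only [insArg]
    by_cases h1 : l < i
    · have : l < i + j := by omega
      simp [h1, this]
    by_cases h2 : l = i
    · simp only [h2, lt_irrefl, if_false, if_true]
      rfl
    · have a1 : ¬ (l + (N + 1) - 1 < i + j) := by omega
      have a2 : ¬ (l + (N + 1) - 1 = i + j) := by omega
      have a3 : l + (N + 1) - 1 + (P + 1) - 1 = l + (N + P + 1) - 1 := by omega
      simp only [h1, h2, a1, a2, a3, if_false]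

/-! ### Associators and the pre-Lie identity -/

lemma gcomp_gcomp_right {K V : Type*} [Field K] [AddCommGroup V] [Module K V]
    {𝒜 : ZMod 2 → Submodule K V} {M : ℕ} {qx : ZMod 2} {x : (ℕ → ZMod 2) → (ℕ → V) → V}
    (hx : IsHomogMultilinear 𝒜 (M + 1) qx x) (N P : ℕ) (qy qz : ZMod 2)
    (y z : (ℕ → ZMod 2) → (ℕ → V) → V) (pa : ℕ → ZMod 2) (a : ℕ → V) :
    gcomp (M + 1) (N + P + 1) (qy + qz) x (gcomp (N + 1) (P + 1) qz y z) pa a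
      = ∑ i ∈ Finset.range (M + 1), ∑ j ∈ Finset.range (N + 1),
          gTerm N P qy qz x y z pa a i (i + j) := by
  unfold gcomp
  refine Finset.sum_congr rfl fun i hi => ?_
  obtain ⟨f, hf⟩ := exists_slotHom hx (Finset.mem_range.1 hi) (N + P + 1)
    (insPar i (N + P + 1) (qy + qz) pa) a
  rw [hf, map_sum, Finset.smul_sum]
  refine Finset.sum_congr rfl fun j hj => ?_
  have hj' : j ≤ N := by have := Finset.mem_range.1 hj; omega
  rw [gTerm_nested _ _ _ _ _ _ _ _ _ _ _ hj', map_zsmul, hf]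
  simp only [Nat.add_sub_cancel]

lemma assoc_eq {K V : Type*} [Field K] [AddCommGroup V] [Module K V]
    {𝒜 : ZMod 2 → Submodule K V} {M : ℕ} {qx : ZMod 2} {x : (ℕ → ZMod 2) → (ℕ → V) → V}
    (hx : IsHomogMultilinear 𝒜 (M + 1) qx x) (N P : ℕ) (qy qz : ZMod 2)
    (y z : (ℕ → ZMod 2) → (ℕ → V) → V) (pa : ℕ → ZMod 2) (a : ℕ → V) :
    gcomp (M + N + 1) (P + 1) qz (gcomp (M + 1) (N + 1) qy x y) z pa a
      - gcomp (M + 1) (N + P + 1) (qy + qz) x (gcomp (N + 1) (P + 1) qz y z) pa a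
      = gLeft M N P qy qz x y z pa a + gRight M N P qy qz x y z pa a := by
  rw [gcomp_gcomp_left, gcomp_gcomp_right hx, sum_triangles, gLeft, gRight]
  abel

/-- Disjoint insertions commute up to the Koszul sign. -/
lemma gLeft_eq {K V : Type*} [Field K] [AddCommGroup V] [Module K V]
    {𝒜 : ZMod 2 → Submodule K V} {P : ℕ} {qz : ZMod 2} {z : (ℕ → ZMod 2) → (ℕ → V) → V}
    (hz : IsHomogMultilinear 𝒜 (P + 1) qz z) (M N : ℕ) (qy : ZMod 2)
    (x y : (ℕ → ZMod 2) → (ℕ → V) → V) (pa : ℕ → ZMod 2) (a : ℕ → V) :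
    gLeft M N P qy qz x y z pa a
      = ((-1 : ℤ) ^ (N * P + qy.val * qz.val)) • gRight M P N qz qy x z y pa a := by
  unfold gLeft gRight
  rw [Finset.smul_sum]
  refine Finset.sum_congr rfl fun i hi => ?_
  rw [Finset.smul_sum]
  refine Finset.sum_congr rfl fun k hk => ?_
  have hk' : k < i := Finset.mem_range.1 hk
  unfold gTerm
  have hzz : z (fun l => insPar (i + P) (N + 1) qy pa (k + l))
      (fun l => insArg (i + P) (N + 1)
        (y (fun l => pa (i + P + l)) (fun l => a (i + P + l))) a (k + l))
      = z (fun l => pa (k + l)) (fun l => a (k + l)) := by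
    apply hz.2.2.1
    · intro l hl
      have : k + l < i + P := by omega
      simp [insPar, this]
    · intro l hl
      have : k + l < i + P := by omega
      simp [insArg, this]
  have hy1 : (fun l => insPar k (P + 1) qz pa (i + l)) = fun l => pa (i + P + l) := by
    funext l
    have a1 : ¬ (i + l < k) := by omega
    have a2 : ¬ (i + l = k) := by omega
    have a3 : i + l + (P + 1) - 1 = i + P + l := by omega
    simp only [insPar, a1, a2, a3, if_false]
  have hy2 : ∀ v : V, (fun l => insArg k (P + 1) v a (i + l)) = fun l => a (i + P + l) := by
    intro v
    funext l
    have a1 : ¬ (i + l < k) := by omega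
    have a2 : ¬ (i + l = k) := by omega
    have a3 : i + l + (P + 1) - 1 = i + P + l := by omega
    simp only [insArg, a1, a2, a3, if_false]
  rw [hzz, hy2, hy1]
  simp only [smul_smul, ← pow_add]
  congr 1
  · apply negOnePow_congr
    push_cast
    simp only [ZMod.natCast_zmod_val]
    obtain ⟨r, rfl⟩ : ∃ r, i = r + 1 := ⟨i - 1, by omega⟩
    have e : r + 1 + P = r + P + 1 := by omega
    rw [sum_insPar (by omega : k ≤ r), sum_insPar_of_le (by omega : k ≤ r + 1 + P), e]
    -- the exponents agree up to twice `N * P`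
    have h2 : (2 : ZMod 2) = 0 := rfl
    linear_combination (-(N : ZMod 2) * P) * h2
  congr 1
  · funext l
    rcases lt_trichotomy l k with h | h | h
    · have a1 : l < i := by omega
      have a2 : l < i + P := by omega
      simp [insPar, h, a1, a2]
    · subst h
      have a4 : ∀ t ∈ Finset.range (P + 1), insPar (i + P) (N + 1) qy pa (l + t) = pa (l + t) := by
        intro t ht
        have := Finset.mem_range.1 ht
        have : l + t < i + P := by omega
        simp [insPar, this]
      have e1 : insPar l (P + 1) qz (insPar (i + P) (N + 1) qy pa) l
          = qz + ∑ t ∈ Finset.range (P + 1), pa (l + t) := by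
        rw [← Finset.sum_congr rfl a4]
        simp [insPar]
      rw [e1]
      simp [insPar, hk']
    · have b1 : ¬ (l < k) := by omega
      have b2 : ¬ (l = k) := by omega
      rcases lt_trichotomy l i with h' | h' | h'
      · have c1 : l + (P + 1) - 1 < i + P := by omega
        simp only [insPar, b1, b2, h', c1, if_true, if_false]
      · subst h'
        have c1 : ∀ t, insPar k (P + 1) qz pa (l + t) = pa (l + P + t) := fun t =>
          congrFun hy1 t
        have e1 : insPar l (N + 1) qy (insPar k (P + 1) qz pa) l
            = qy + ∑ t ∈ Finset.range (N + 1), pa (l + P + t) := by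
          simp only [← c1]
          simp [insPar]
        rw [e1]
        have c2 : l + (P + 1) - 1 = l + P := by omega
        simp only [insPar, b1, b2, c2, lt_irrefl, if_true, if_false]
      · have c1 : ¬ (l < i) := by omega
        have c2 : ¬ (l = i) := by omega
        have c3 : ¬ (l + (N + 1) - 1 < k) := by omega
        have c4 : ¬ (l + (N + 1) - 1 = k) := by omega
        have c5 : ¬ (l + (P + 1) - 1 < i + P) := by omega
        have c6 : ¬ (l + (P + 1) - 1 = i + P) := by omega
        have c7 : l + (N + 1) - 1 + (P + 1) - 1 = l + (P + 1) - 1 + (N + 1) - 1 := by omega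
        simp only [insPar, b1, b2, c1, c2, c3, c4, c5, c6, c7, if_false]
  · funext l
    rcases lt_trichotomy l k with h | h | h
    · have a1 : l < i := by omega
      have a2 : l < i + P := by omega
      simp [insArg, h, a1, a2]
    · subst h
      simp [insArg, hk']
    · have b1 : ¬ (l < k) := by omega
      have b2 : ¬ (l = k) := by omega
      rcases lt_trichotomy l i with h' | h' | h'
      · have c1 : l + (P + 1) - 1 < i + P := by omega
        simp only [insArg, b1, b2, h', c1, if_true, if_false]
      · subst h'
        have c2 : l + (P + 1) - 1 = l + P := by omega
        simp only [insArg, b1, b2, c2, lt_irrefl, if_true, if_false]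
      · have c1 : ¬ (l < i) := by omega
        have c2 : ¬ (l = i) := by omega
        have c3 : ¬ (l + (N + 1) - 1 < k) := by omega
        have c4 : ¬ (l + (N + 1) - 1 = k) := by omega
        have c5 : ¬ (l + (P + 1) - 1 < i + P) := by omega
        have c6 : ¬ (l + (P + 1) - 1 = i + P) := by omega
        have c7 : l + (N + 1) - 1 + (P + 1) - 1 = l + (P + 1) - 1 + (N + 1) - 1 := by omega
        simp only [insArg, b1, b2, c1, c2, c3, c4, c5, c6, c7, if_false]

/-- The graded right pre-Lie identity. -/
lemma assoc_symm {K V : Type*} [Field K] [AddCommGroup V] [Module K V]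
    {𝒜 : ZMod 2 → Submodule K V} {M N P : ℕ} {qx qy qz : ZMod 2}
    {x y z : (ℕ → ZMod 2) → (ℕ → V) → V}
    (hx : IsHomogMultilinear 𝒜 (M + 1) qx x) (hy : IsHomogMultilinear 𝒜 (N + 1) qy y)
    (hz : IsHomogMultilinear 𝒜 (P + 1) qz z) (pa : ℕ → ZMod 2) (a : ℕ → V) :
    gcomp (M + N + 1) (P + 1) qz (gcomp (M + 1) (N + 1) qy x y) z pa a
      - gcomp (M + 1) (N + P + 1) (qy + qz) x (gcomp (N + 1) (P + 1) qz y z) pa a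
      = ((-1 : ℤ) ^ (N * P + qy.val * qz.val)) •
        (gcomp (M + P + 1) (N + 1) qy (gcomp (M + 1) (P + 1) qz x z) y pa a
          - gcomp (M + 1) (N + P + 1) (qy + qz) x (gcomp (P + 1) (N + 1) qy z y) pa a) := by
  have h := assoc_eq hx P N qz qy z y pa a
  rw [add_comm P N, add_comm qz qy] at h
  rw [assoc_eq hx, h, gLeft_eq hz, gLeft_eq hy, mul_comm P N, mul_comm qz.val, smul_add,
    smul_smul, ← pow_add, Even.neg_one_pow ⟨_, rfl⟩, one_smul, add_comm]

/-! ### Biadditivity and the Jacobi identity -/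

lemma gcomp_sub_left {V : Type*} [AddCommGroup V] (m n : ℕ) (q : ZMod 2) (s : ℤ)
    (x x' y : (ℕ → ZMod 2) → (ℕ → V) → V) (pa : ℕ → ZMod 2) (a : ℕ → V) :
    gcomp m n q (fun p a => x p a - s • x' p a) y pa a
      = gcomp m n q x y pa a - s • gcomp m n q x' y pa a := by
  simp only [gcomp, smul_sub, Finset.sum_sub_distrib, Finset.smul_sum]
  congr 1
  exact Finset.sum_congr rfl fun i _ => smul_comm _ _ _

lemma gcomp_sub_right {K V : Type*} [Field K] [AddCommGroup V] [Module K V]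
    {𝒜 : ZMod 2 → Submodule K V} {m : ℕ} {qx : ZMod 2} {x : (ℕ → ZMod 2) → (ℕ → V) → V}
    (hx : IsHomogMultilinear 𝒜 m qx x) (n : ℕ) (q : ZMod 2) (s : ℤ)
    (y y' : (ℕ → ZMod 2) → (ℕ → V) → V) (pa : ℕ → ZMod 2) (a : ℕ → V) :
    gcomp m n q x (fun p a => y p a - s • y' p a) pa a
      = gcomp m n q x y pa a - s • gcomp m n q x y' pa a := by
  simp only [gcomp, Finset.smul_sum, ← Finset.sum_sub_distrib]
  refine Finset.sum_congr rfl fun i hi => ?_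
  obtain ⟨f, hf⟩ := exists_slotHom hx (Finset.mem_range.1 hi) n (insPar i n q pa) a
  rw [hf, hf, hf, map_sub, map_zsmul, smul_sub, smul_comm]

/-- The Koszul sign is multiplicative in its second argument. -/
lemma koszul_add (M N P : ℕ) (qx qy qz : ZMod 2) :
    (-1 : ℤ) ^ (M * (N + P) + qx.val * (qy + qz).val)
      = (-1 : ℤ) ^ (M * N + qx.val * qy.val) * (-1 : ℤ) ^ (M * P + qx.val * qz.val) := by
  rw [← pow_add]
  apply negOnePow_congr
  push_cast
  simp only [ZMod.natCast_zmod_val]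
  ring

/-- The Gerstenhaber bracket makes the truncated Hochschild complex a bigraded Lie
algebra: bigraded antisymmetry and the bigraded Jacobi identity hold, evaluated on
homogeneous arguments. -/
theorem gerstenhaber_bracket_bigraded_Lie {K V : Type*} [Field K] [AddCommGroup V]
    [Module K V] (𝒜 : ZMod 2 → Submodule K V) (m n p : ℕ)
    (hm : 1 ≤ m) (hn : 1 ≤ n) (hp : 1 ≤ p)
    (qx qy qz : ZMod 2) (x y z : (ℕ → ZMod 2) → (ℕ → V) → V)
    (hx : IsHomogMultilinear 𝒜 m qx x) (hy : IsHomogMultilinear 𝒜 n qy y)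
    (hz : IsHomogMultilinear 𝒜 p qz z) :
    ∀ (pa : ℕ → ZMod 2) (a : ℕ → V), (∀ j, a j ∈ 𝒜 (pa j)) →
      (gBracket n m qy qx y x pa a
        = -(((-1 : ℤ) ^ ((m - 1) * (n - 1) + qx.val * qy.val)) •
            gBracket m n qx qy x y pa a))
      ∧ (gBracket m (n + p - 1) qx (qy + qz) x (gBracket n p qy qz y z) pa a
        = gBracket (m + n - 1) p (qx + qy) qz (gBracket m n qx qy x y) z pa a
          + ((-1 : ℤ) ^ ((m - 1) * (n - 1) + qx.val * qy.val)) •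
              gBracket n (m + p - 1) qy (qx + qz) y (gBracket m p qx qz x z) pa a) := by
  intro pa a _
  obtain ⟨M, rfl⟩ : ∃ M, m = M + 1 := ⟨m - 1, by omega⟩
  obtain ⟨N, rfl⟩ : ∃ N, n = N + 1 := ⟨n - 1, by omega⟩
  obtain ⟨P, rfl⟩ : ∃ P, p = P + 1 := ⟨p - 1, by omega⟩
  have eNP : N + 1 + (P + 1) - 1 = N + P + 1 := by omega
  have eMN : M + 1 + (N + 1) - 1 = M + N + 1 := by omega
  have eMP : M + 1 + (P + 1) - 1 = M + P + 1 := by omega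
  have hxyz := assoc_symm hx hy hz pa a
  have hyxz := assoc_symm hy hx hz pa a
  have hzxy := assoc_symm hz hx hy pa a
  have kx := koszul_add M N P qx qy qz
  have ky := koszul_add N M P qy qx qz
  have kz := koszul_add P M N qz qx qy
  rw [mul_comm P (M + N), mul_comm qz.val (qx + qy).val, mul_comm P M, mul_comm P N,
    mul_comm qz.val, mul_comm qz.val] at kz
  rw [mul_comm N M, mul_comm qy.val qx.val] at ky
  rw [add_comm N M] at hyxz
  rw [add_comm P M, add_comm P N] at hzxy
  rw [eNP, eMN, eMP]
  unfold gBracket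
  rw [gcomp_sub_left, gcomp_sub_left, gcomp_sub_left, gcomp_sub_right hx, gcomp_sub_right hy,
    gcomp_sub_right hz]
  simp only [Nat.add_sub_cancel]
  rw [kx, ky, kz, mul_comm N M, mul_comm qy.val qx.val]
  have sxy := neg_one_pow_eq_or ℤ (M * N + qx.val * qy.val)
  have sxz := neg_one_pow_eq_or ℤ (M * P + qx.val * qz.val)
  have syz := neg_one_pow_eq_or ℤ (N * P + qy.val * qz.val)
  generalize (-1 : ℤ) ^ (M * N + qx.val * qy.val) = s at *
  generalize (-1 : ℤ) ^ (M * P + qx.val * qz.val) = t at *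
  generalize (-1 : ℤ) ^ (N * P + qy.val * qz.val) = u at *
  have hs : s * s = 1 := by rcases sxy with h | h <;> simp [h]
  constructor
  · rw [smul_sub, smul_smul, hs, one_smul, neg_sub]
  -- each case below is the combination `-hxyz + s • hyxz - (t * u) • hzxy`
  · rcases sxy with rfl | rfl <;> rcases sxz with rfl | rfl <;> rcases syz with rfl | rfl
    · linear_combination (norm := module) -hxyz + hyxz - hzxy
    · linear_combination (norm := module) -hxyz + hyxz + hzxy
    · linear_combination (norm := module) -hxyz + hyxz + hzxy
    · linear_combination (norm := module) -hxyz + hyxz - hzxy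
    · linear_combination (norm := module) -hxyz - hyxz - hzxy
    · linear_combination (norm := module) -hxyz - hyxz + hzxy
    · linear_combination (norm := module) -hxyz - hyxz + hzxy
    · linear_combination (norm := module) -hxyz - hyxz - hzxy
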